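/- arXiv:1810.04541 — 2 statements merged into one kernel-verified Lean document; each statement's English description precedes it below -/
import Mathlib

section
/- (Covering half of Proposition 3.1.) Let (X,d_X) and (Z,d_Z) be metric spaces carrying continuous flows g^X and g^Z, and let π : X → Z be a continuous map intertwining the flows, i.e. π(g^X_t(x)) = g^Z_t(π(x)) for all t ∈ ℝ and x ∈ X. Assume there is ε₀ > 0 such that for every x ∈ X the restriction of π to the open ball B(x,ε₀) is a bijection onto the open ball B(π(x),ε₀) satisfying d_Z(π(a),π(b)) = d_X(a,b) for all a,b ∈ B(x,ε₀). Then for every 0 < ε ≤ ε₀ and every p ∈ X, π(W^{wu}_ε(p)) = W^{wu}_ε(π(p)), where the local weakly unstable sets are taken with respect to g^X and g^Z respectively. -/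
/-!
Statement 5 (covering half of Proposition 3.1): if `π : X → Z` intertwines two
continuous flows and restricts to an isometric bijection from each ball `B(x,ε₀)` onto
the ball `B(π(x),ε₀)`, then for every `0 < ε ≤ ε₀` and every `p ∈ X`,
`π(W^{wu}_ε(p)) = W^{wu}_ε(π(p))`.
-/

open Set Metric

/-- The local weakly unstable set of size `ε` at `p` for a flow `g`, with respect to a
distance function `d`. -/
def Wwu {α : Type*} (d : α → α → ℝ) (g : ℝ → α → α) (ε : ℝ) (p : α) : Set α :=
  {q | ∀ t : ℝ, 0 ≤ t → d (g (-t) p) (g (-t) q) < ε}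

theorem wwu_covering
    {X Z : Type*} [MetricSpace X] [MetricSpace Z]
    (gX : ℝ → X → X) (gZ : ℝ → Z → Z)
    (hgXcont : Continuous fun p : ℝ × X => gX p.1 p.2)
    (hgZcont : Continuous fun p : ℝ × Z => gZ p.1 p.2)
    (hgX0 : ∀ x, gX 0 x = x)
    (hgXadd : ∀ t t' x, gX (t + t') x = gX t (gX t' x))
    (hgZ0 : ∀ z, gZ 0 z = z)
    (hgZadd : ∀ t t' z, gZ (t + t') z = gZ t (gZ t' z))
    (π : X → Z) (hπcont : Continuous π)
    (hπflow : ∀ (t : ℝ) (x : X), π (gX t x) = gZ t (π x))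
    (ε₀ : ℝ) (hε₀ : 0 < ε₀)
    (hbij : ∀ x : X, Set.BijOn π (ball x ε₀) (ball (π x) ε₀))
    (hisom : ∀ x : X, ∀ a ∈ ball x ε₀, ∀ b ∈ ball x ε₀, dist (π a) (π b) = dist a b)
    (ε : ℝ) (hε : 0 < ε) (hεε₀ : ε ≤ ε₀) (p : X) :
    π '' Wwu dist gX ε p = Wwu dist gZ ε (π p) := by
  have key : ∀ x y : X, dist x y < ε₀ → dist (π x) (π y) = dist x y := by
    intro x y h
    exact hisom x x (mem_ball_self hε₀) y (by rwa [mem_ball, dist_comm])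
  ext z
  constructor
  · rintro ⟨q, hq, rfl⟩ t ht
    have h := hq t ht
    rw [← hπflow, ← hπflow, key _ _ (h.trans_le hεε₀)]
    exact h
  · intro hz
    have hz0 : dist (π p) z < ε := by
      have h := hz 0 le_rfl
      simpa [hgZ0] using h
    obtain ⟨q, hq, rfl⟩ := (hbij p).surjOn
      (show z ∈ ball (π p) ε₀ by rw [mem_ball, dist_comm]; exact hz0.trans_le hεε₀)
    refine ⟨q, ?_, rfl⟩
    have hc : ∀ x : X, Continuous fun t : ℝ => gX (-|t|) x := fun x =>
      hgXcont.comp (by fun_prop : Continuous fun t : ℝ => ((-|t|, x) : ℝ × X))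
    have hf : Continuous fun t : ℝ => dist (gX (-|t|) p) (gX (-|t|) q) := (hc p).dist (hc q)
    have hh : Continuous fun t : ℝ => dist (π (gX (-|t|) p)) (π (gX (-|t|) q)) :=
      (hπcont.comp (hc p)).dist (hπcont.comp (hc q))
    have hlt : ∀ t : ℝ, dist (π (gX (-|t|) p)) (π (gX (-|t|) q)) < ε := by
      intro t
      rw [hπflow, hπflow]
      exact hz |t| (abs_nonneg t)
    have hS : {t : ℝ | dist (gX (-|t|) p) (gX (-|t|) q) < ε₀} =
        {t : ℝ | dist (π (gX (-|t|) p)) (π (gX (-|t|) q)) = dist (gX (-|t|) p) (gX (-|t|) q)} := by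
      ext t
      constructor
      · intro h
        exact key _ _ h
      · intro h
        have h' := hlt t
        rw [mem_setOf_eq] at h ⊢
        rw [h] at h'
        exact h'.trans_le hεε₀
    have hclopen : IsClopen {t : ℝ | dist (gX (-|t|) p) (gX (-|t|) q) < ε₀} := by
      refine ⟨?_, isOpen_lt hf continuous_const⟩
      rw [hS]
      exact isClosed_eq hh hf
    have huniv := hclopen.eq_univ ⟨0, by
      simpa [hgX0, dist_comm] using hq⟩
    intro t ht
    have h1 : t ∈ {t : ℝ | dist (gX (-|t|) p) (gX (-|t|) q) < ε₀} := huniv ▸ mem_univ t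
    rw [hS] at h1
    have h2 := hlt t
    rw [mem_setOf_eq] at h1
    rwa [h1, abs_of_nonneg ht] at h2
end

section
/- (Non-minimality of the horocycle flow on Sol-manifolds.) Let Sol³ denote ℝ³ with the group law (x,y,z)·(x',y',z') = (x + e^z x', y + e^{−z} y', z + z'), and let Γ be a discrete cocompact subgroup of Sol³ such that Γ ∩ (ℝ²×{0}) is a lattice in the subgroup ℝ²×{0} ≅ ℝ². Consider on the compact quotient M = Γ\Sol³ the flow induced by the right translations h_s(x,y,z) = (x,y,z)·(s,0,0) = (x + e^z s, y, z). Then for every point p = Γ(x,y,z) of M, the closure of the h-orbit of p equals the image in M of the plane {(x',y',z) : x',y' ∈ ℝ}, which is a compact proper subset of M. In particular the flow h is not minimal. -/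
/-!
Statement 11 (non-minimality of the horocycle flow on Sol-manifolds): for a discrete
cocompact subgroup `Γ ≤ Sol³` whose intersection with the plane subgroup `ℝ²×{0} ≅ ℝ²`
is a lattice in `ℝ²`, the closure of every orbit of the flow
`h_s(x,y,z) = (x + e^z s, y, z)` on `M = Γ\Sol³` is the image of the corresponding
plane `{(x',y',z)}`, a compact proper subset of `M`; in particular `h` is not minimal.
-/

open QuotientGroup

/-- The solvable Lie group `Sol³`: `ℝ³` with the multiplication
`(x,y,z)·(x',y',z') = (x + e^z x', y + e^{−z} y', z + z')`. -/
def Sol3 : Type := ℝ × ℝ × ℝ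

namespace Sol3

/-- The point `(x,y,z)` of `Sol³`. -/
def mk (x y z : ℝ) : Sol3 := (x, y, z)

noncomputable instance : Mul Sol3 :=
  ⟨fun a b => (a.1 + Real.exp a.2.2 * b.1, a.2.1 + Real.exp (-a.2.2) * b.2.1, a.2.2 + b.2.2)⟩

instance : One Sol3 := ⟨((0 : ℝ), (0 : ℝ), (0 : ℝ))⟩

noncomputable instance : Inv Sol3 :=
  ⟨fun a => (-(Real.exp (-a.2.2) * a.1), -(Real.exp a.2.2 * a.2.1), -a.2.2)⟩

theorem mul_def (a b : Sol3) :
    a * b = (a.1 + Real.exp a.2.2 * b.1, a.2.1 + Real.exp (-a.2.2) * b.2.1, a.2.2 + b.2.2) := rfl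

theorem one_def : (1 : Sol3) = mk 0 0 0 := rfl

theorem inv_def (a : Sol3) :
    a⁻¹ = (-(Real.exp (-a.2.2) * a.1), -(Real.exp a.2.2 * a.2.1), -a.2.2) := rfl

theorem mk_mul_mk (x y z x' y' z' : ℝ) :
    mk x y z * mk x' y' z'
      = mk (x + Real.exp z * x') (y + Real.exp (-z) * y') (z + z') := rfl

theorem mk_inv (x y z : ℝ) :
    (mk x y z)⁻¹ = mk (-(Real.exp (-z) * x)) (-(Real.exp z * y)) (-z) := rfl

noncomputable instance : Group Sol3 where
  mul_assoc a b c := by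
    simp only [mul_def]
    refine Prod.ext ?_ (Prod.ext ?_ ?_)
    · show a.1 + Real.exp a.2.2 * b.1 + Real.exp (a.2.2 + b.2.2) * c.1
          = a.1 + Real.exp a.2.2 * (b.1 + Real.exp b.2.2 * c.1)
      rw [Real.exp_add]; ring
    · show a.2.1 + Real.exp (-a.2.2) * b.2.1 + Real.exp (-(a.2.2 + b.2.2)) * c.2.1
          = a.2.1 + Real.exp (-a.2.2) * (b.2.1 + Real.exp (-b.2.2) * c.2.1)
      rw [neg_add, Real.exp_add]; ring
    · exact add_assoc _ _ _
  one_mul a := by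
    simp only [mul_def, one_def]
    refine Prod.ext ?_ (Prod.ext ?_ ?_) <;> simp [mk]
  mul_one a := by
    simp only [mul_def, one_def]
    refine Prod.ext ?_ (Prod.ext ?_ ?_) <;> simp [mk]
  inv_mul_cancel a := by
    simp only [mul_def, inv_def, one_def]
    refine Prod.ext ?_ (Prod.ext ?_ ?_)
    · show -(Real.exp (-a.2.2) * a.1) + Real.exp (-a.2.2) * a.1 = (mk 0 0 0).1
      simp [mk]
    · show -(Real.exp a.2.2 * a.2.1) + Real.exp (- -a.2.2) * a.2.1 = (mk 0 0 0).2.1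
      rw [neg_neg]; simp [mk]
    · show -a.2.2 + a.2.2 = (mk 0 0 0).2.2
      simp [mk]

noncomputable instance : TopologicalSpace Sol3 :=
  inferInstanceAs (TopologicalSpace (ℝ × ℝ × ℝ))

end Sol3

/-- Right translation by `g` on the space `Γ\H` of right cosets `Γx`. -/
def rightMulQuot {H : Type*} [Group H] (Γ : Subgroup H) (g : H) :
    Quotient (QuotientGroup.rightRel Γ) → Quotient (QuotientGroup.rightRel Γ) :=
  Quotient.map (· * g) (fun a b hab => by
    have h : b * a⁻¹ ∈ Γ := QuotientGroup.rightRel_apply.mp hab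
    exact QuotientGroup.rightRel_apply.mpr (by simpa [mul_assoc] using h))

/-- The intersection of `Γ` with the plane subgroup `ℝ²×{0} ≅ ℝ²` of `Sol³`, viewed as
an additive subgroup of `ℝ²`. -/
def latticePart (Γ : Subgroup Sol3) : AddSubgroup (ℝ × ℝ) where
  carrier := {v | Sol3.mk v.1 v.2 0 ∈ Γ}
  add_mem' := by
    intro a b ha hb
    have h := Γ.mul_mem ha hb
    rw [Sol3.mk_mul_mk] at h
    simpa using h
  zero_mem' := by
    have h := Γ.one_mem
    rw [Sol3.one_def] at h
    simpa using h
  neg_mem' := by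
    intro a ha
    have h := Γ.inv_mem ha
    rw [Sol3.mk_inv] at h
    simpa using h

open Filter Topology

/-- The projection of `Γ` to the `z`-axis. -/
def zPart (Γ : Subgroup Sol3) : AddSubgroup ℝ where
  carrier := {t | ∃ w ∈ Γ, w.2.2 = t}
  add_mem' := by
    rintro a b ⟨v, hv, rfl⟩ ⟨w, hw, rfl⟩
    exact ⟨v * w, Γ.mul_mem hv hw, rfl⟩
  zero_mem' := ⟨1, Γ.one_mem, rfl⟩
  neg_mem' := by
    rintro a ⟨v, hv, rfl⟩
    exact ⟨v⁻¹, Γ.inv_mem hv, rfl⟩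

theorem lattice_inv (Γ : Subgroup Sol3) {t a b : ℝ} (ht : t ∈ zPart Γ)
    (h : (a, b) ∈ latticePart Γ) :
    (Real.exp t * a, Real.exp (-t) * b) ∈ latticePart Γ := by
  obtain ⟨⟨p, q, r⟩, hw, hr⟩ := ht
  have hr : r = t := hr
  subst hr
  have h' : Sol3.mk a b 0 ∈ Γ := h
  have hw' : Sol3.mk p q r ∈ Γ := hw
  have := Γ.mul_mem (Γ.mul_mem hw' h') (Γ.inv_mem hw')
  rw [Sol3.mk_inv, Sol3.mk_mul_mk, Sol3.mk_mul_mk] at this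
  show Sol3.mk _ _ _ ∈ Γ
  convert this using 2
  · simp only [add_zero, mul_neg, ← mul_assoc, ← Real.exp_add]
    simp
  · simp only [add_zero, mul_neg, ← mul_assoc, ← Real.exp_add]
    simp
  · simp

theorem continuous_z : Continuous (fun w : Sol3 => (w.2.2 : ℝ)) :=
  (continuous_snd.comp continuous_snd : Continuous (fun w : ℝ × ℝ × ℝ => w.2.2))

theorem continuous_smk (z : ℝ) : Continuous (fun v : ℝ × ℝ => Sol3.mk v.1 v.2 z) :=
  (by fun_prop : Continuous (fun v : ℝ × ℝ => ((v.1, v.2, z) : ℝ × ℝ × ℝ)))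

theorem zPart_pos (Γ : Subgroup Sol3) [CompactSpace (Quotient (QuotientGroup.rightRel Γ))] :
    ∃ t ∈ zPart Γ, 0 < t := by
  by_contra hcon
  push Not at hcon
  have h0 : ∀ t ∈ zPart Γ, t = 0 := fun t ht => by
    have h1 := hcon t ht
    have h2 := hcon (-t) ((zPart Γ).neg_mem ht)
    linarith
  let f : Quotient (QuotientGroup.rightRel Γ) → ℝ :=
    Quotient.lift (fun w : Sol3 => (w.2.2 : ℝ)) (fun a b hab => by
      have h : b * a⁻¹ ∈ Γ := QuotientGroup.rightRel_apply.mp hab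
      have := h0 _ ⟨_, h, rfl⟩
      have h3 : b.2.2 + -a.2.2 = 0 := this
      show a.2.2 = b.2.2
      linarith)
  have hf : Continuous f := continuous_z.quotient_lift _
  have hs : Function.Surjective f := fun r => ⟨Quotient.mk _ (Sol3.mk 0 0 r), rfl⟩
  have := isCompact_range hf
  rw [hs.range_eq] at this
  exact noncompact_univ ℝ this

theorem lattice_b (Γ : Subgroup Sol3) [CompactSpace ((ℝ × ℝ) ⧸ latticePart Γ)] :
    ∃ a b : ℝ, (a, b) ∈ latticePart Γ ∧ 0 < b := by
  by_contra hcon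
  push Not at hcon
  have h0 : ∀ v ∈ latticePart Γ, v.2 = 0 := fun v hv => by
    have h1 := hcon v.1 v.2 hv
    have h2 := hcon (-v.1) (-v.2) ((latticePart Γ).neg_mem hv)
    linarith
  let f : (ℝ × ℝ) ⧸ latticePart Γ → ℝ :=
    Quotient.lift (fun w : ℝ × ℝ => w.2) (fun a b hab => by
      have h : -a + b ∈ latticePart Γ := QuotientAddGroup.leftRel_apply.mp hab
      have h3 : -a.2 + b.2 = 0 := h0 _ h
      show a.2 = b.2
      linarith)
  have hf : Continuous f := continuous_snd.quotient_lift _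
  have hs : Function.Surjective f := fun r => ⟨Quotient.mk _ (0, r), rfl⟩
  have := isCompact_range hf
  rw [hs.range_eq] at this
  exact noncompact_univ ℝ this

theorem zPart_small (Γ : Subgroup Sol3) [DiscreteTopology (latticePart Γ)]
    [CompactSpace ((ℝ × ℝ) ⧸ latticePart Γ)] :
    ∃ ε > 0, ∀ t ∈ zPart Γ, |t| < ε → t = 0 := by
  obtain ⟨a, b, hab, hb⟩ := lattice_b Γ
  have hd : IsOpen ({⟨(a, b), hab⟩} : Set (latticePart Γ)) := isOpen_discrete _
  obtain ⟨U, hU, hUe⟩ := isOpen_induced_iff.mp hd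
  have hmem : (a, b) ∈ U := by
    have : (⟨(a, b), hab⟩ : latticePart Γ) ∈ Subtype.val ⁻¹' U := by rw [hUe]; rfl
    exact this
  have hc : Continuous (fun t : ℝ => (Real.exp t * a, Real.exp (-t) * b)) := by fun_prop
  have hV := (hU.preimage hc).mem_nhds (x := 0) (by simpa using hmem)
  obtain ⟨ε, hε, hsub⟩ := Metric.mem_nhds_iff.mp hV
  refine ⟨ε, hε, fun t ht hlt => ?_⟩
  have h1 : (Real.exp t * a, Real.exp (-t) * b) ∈ U := hsub (by simpa using hlt)
  have h2 : (⟨_, lattice_inv Γ ht hab⟩ : latticePart Γ) ∈ Subtype.val ⁻¹' U := h1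
  rw [hUe] at h2
  have h3 := congrArg Prod.snd (congrArg Subtype.val h2)
  have h4 : Real.exp (-t) * b = b := h3
  have h5 : Real.exp (-t) = 1 := by
    apply mul_right_cancel₀ hb.ne'
    rw [h4, one_mul]
  rw [Real.exp_eq_one_iff] at h5
  linarith

theorem zPart_closed (Γ : Subgroup Sol3) [DiscreteTopology (latticePart Γ)]
    [CompactSpace ((ℝ × ℝ) ⧸ latticePart Γ)] :
    IsClosed (zPart Γ : Set ℝ) := by
  obtain ⟨ε, hε, h⟩ := zPart_small Γ
  rcases AddSubgroup.dense_or_cyclic (zPart Γ) with hd | ⟨c, hc⟩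
  · obtain ⟨t, ht, htm⟩ := hd.exists_between hε
    have := h t ht (by rw [abs_of_pos htm.1]; exact htm.2)
    exact absurd this htm.1.ne'
  · rw [hc, ← AddSubgroup.zmultiples_eq_closure]
    exact AddSubgroup.isClosed_of_discrete

theorem lattice_dense (Γ : Subgroup Sol3)
    [CompactSpace (Quotient (QuotientGroup.rightRel Γ))]
    [CompactSpace ((ℝ × ℝ) ⧸ latticePart Γ)] :
    Dense ((AddSubgroup.map (AddMonoidHom.snd ℝ ℝ) (latticePart Γ) : AddSubgroup ℝ) : Set ℝ) := by
  obtain ⟨t, ht, htp⟩ := zPart_pos Γ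
  obtain ⟨a, b, hab, hb⟩ := lattice_b Γ
  apply AddSubgroup.dense_of_not_isolated_zero
  intro ε hε
  have hlim : Tendsto (fun n : ℕ => Real.exp (-(n • t)) * b) atTop (𝓝 (0 * b)) := by
    apply Tendsto.mul_const
    apply Real.tendsto_exp_neg_atTop_nhds_zero.comp
    simpa using tendsto_natCast_atTop_atTop.atTop_mul_const htp
  rw [zero_mul] at hlim
  obtain ⟨n, hn⟩ := (hlim.eventually (gt_mem_nhds hε)).exists
  exact ⟨_, ⟨_, lattice_inv Γ ((zPart Γ).nsmul_mem ht n) hab, rfl⟩,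
    mul_pos (Real.exp_pos _) hb, hn⟩

theorem mem_plane_iff (Γ : Subgroup Sol3) (z : ℝ) (w : Sol3) :
    Quotient.mk (QuotientGroup.rightRel Γ) w ∈
      Quotient.mk (QuotientGroup.rightRel Γ) '' {w : Sol3 | w.2.2 = z} ↔ w.2.2 - z ∈ zPart Γ := by
  constructor
  · rintro ⟨v, hv, hvw⟩
    have h : w * v⁻¹ ∈ Γ := QuotientGroup.rightRel_apply.mp (Quotient.exact hvw)
    refine ⟨_, h, ?_⟩
    have hv : v.2.2 = z := hv
    show w.2.2 + -v.2.2 = _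
    rw [hv]; ring
  · rintro ⟨g, hg, hgz⟩
    refine ⟨g⁻¹ * w, ?_, ?_⟩
    · show -g.2.2 + w.2.2 = z
      rw [hgz]; ring
    · apply Quotient.sound
      apply QuotientGroup.rightRel_apply.mpr
      simpa using hg

theorem plane_compact (Γ : Subgroup Sol3) [CompactSpace ((ℝ × ℝ) ⧸ latticePart Γ)] (z : ℝ) :
    IsCompact (Quotient.mk (QuotientGroup.rightRel Γ) '' {w : Sol3 | w.2.2 = z}) := by
  let f : (ℝ × ℝ) ⧸ latticePart Γ → Quotient (QuotientGroup.rightRel Γ) :=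
    Quotient.lift (fun v : ℝ × ℝ => Quotient.mk (QuotientGroup.rightRel Γ) (Sol3.mk v.1 v.2 z))
      (fun a b hab => by
        have h : -a + b ∈ latticePart Γ := QuotientAddGroup.leftRel_apply.mp hab
        have h' : Sol3.mk (-a.1 + b.1) (-a.2 + b.2) 0 ∈ Γ := h
        apply Quotient.sound
        apply QuotientGroup.rightRel_apply.mpr
        convert h' using 1
        rw [Sol3.mk_inv, Sol3.mk_mul_mk]
        congr 1
        · simp only [mul_neg, ← mul_assoc, ← Real.exp_add]
          simp [add_comm]
        · simp only [mul_neg, ← mul_assoc, ← Real.exp_add]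
          simp [add_comm]
        · simp)
  have hf : Continuous f := (continuous_quotient_mk'.comp (continuous_smk z)).quotient_lift _
  have := isCompact_range hf
  convert this using 1
  ext q
  constructor
  · rintro ⟨w, rfl, rfl⟩
    exact ⟨Quotient.mk _ (w.1, w.2.1), rfl⟩
  · rintro ⟨v, rfl⟩
    induction v using Quotient.inductionOn with
    | h v => exact ⟨_, rfl, rfl⟩

theorem plane_closed (Γ : Subgroup Sol3) [DiscreteTopology (latticePart Γ)]
    [CompactSpace ((ℝ × ℝ) ⧸ latticePart Γ)] (z : ℝ) :
    IsClosed (Quotient.mk (QuotientGroup.rightRel Γ) '' {w : Sol3 | w.2.2 = z}) := by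
  rw [← isQuotientMap_quotient_mk'.isClosed_preimage]
  have : (Quotient.mk (QuotientGroup.rightRel Γ)) ⁻¹'
      (Quotient.mk (QuotientGroup.rightRel Γ) '' {w : Sol3 | w.2.2 = z})
      = (fun w : Sol3 => (w.2.2 : ℝ) - z) ⁻¹' (zPart Γ : Set ℝ) := by
    ext w
    exact mem_plane_iff Γ z w
  exact this ▸ (zPart_closed Γ).preimage (continuous_z.sub continuous_const)

theorem orbit_apply (Γ : Subgroup Sol3) (x y z s : ℝ) :
    rightMulQuot Γ (Sol3.mk s 0 0) (Quotient.mk (QuotientGroup.rightRel Γ) (Sol3.mk x y z))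
      = Quotient.mk (QuotientGroup.rightRel Γ) (Sol3.mk (x + Real.exp z * s) y z) := by
  show Quotient.mk _ (Sol3.mk x y z * Sol3.mk s 0 0) = _
  rw [Sol3.mk_mul_mk]
  simp

theorem orbit_closure (Γ : Subgroup Sol3)
    [CompactSpace (Quotient (QuotientGroup.rightRel Γ))]
    [DiscreteTopology (latticePart Γ)]
    [CompactSpace ((ℝ × ℝ) ⧸ latticePart Γ)]
    (x y z : ℝ) :
    closure (Set.range fun s : ℝ =>
        rightMulQuot Γ (Sol3.mk s 0 0)
          (Quotient.mk (QuotientGroup.rightRel Γ) (Sol3.mk x y z)))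
      = Quotient.mk (QuotientGroup.rightRel Γ) '' {w : Sol3 | w.2.2 = z} := by
  apply Set.Subset.antisymm
  · apply closure_minimal _ (plane_closed Γ z)
    rintro _ ⟨s, rfl⟩
    exact ⟨_, rfl, (orbit_apply Γ x y z s).symm⟩
  · rintro _ ⟨⟨x', y', z'⟩, hz, rfl⟩
    have hz : z' = z := hz
    subst hz
    let g : ℝ → Quotient (QuotientGroup.rightRel Γ) := fun u =>
      Quotient.mk (QuotientGroup.rightRel Γ) (Sol3.mk x' (y + u) z')
    have hg : Continuous g :=
      continuous_quotient_mk'.comp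
        ((continuous_smk z').comp (by fun_prop : Continuous fun u : ℝ => (x', y + u)))
    have h1 : y' - y ∈ closure ((AddSubgroup.map (AddMonoidHom.snd ℝ ℝ) (latticePart Γ) :
      AddSubgroup ℝ) : Set ℝ) := lattice_dense Γ _
    have h2 := map_mem_closure hg h1 (t := Set.range fun s : ℝ =>
        rightMulQuot Γ (Sol3.mk s 0 0)
          (Quotient.mk (QuotientGroup.rightRel Γ) (Sol3.mk x y z'))) ?_
    · have h3 : g (y' - y) = Quotient.mk (QuotientGroup.rightRel Γ) (Sol3.mk x' y' z') := by
        simp [g]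
      rw [h3] at h2
      exact h2
    · rintro _ ⟨⟨a, b⟩, hab, rfl⟩
      refine ⟨Real.exp (-z') * (x' - a - x), ?_⟩
      simp only [orbit_apply]
      apply Quotient.sound
      apply QuotientGroup.rightRel_apply.mpr
      have hab' : Sol3.mk a b 0 ∈ Γ := hab
      convert hab' using 1
      rw [Sol3.mk_inv, Sol3.mk_mul_mk]
      congr 1
      · simp only [mul_neg, ← mul_assoc, ← Real.exp_add]
        simp
      · simp only [mul_neg, ← mul_assoc, ← Real.exp_add]
        simp
      · simp

theorem plane_ne_univ (Γ : Subgroup Sol3) [DiscreteTopology (latticePart Γ)]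
    [CompactSpace ((ℝ × ℝ) ⧸ latticePart Γ)] (z : ℝ) :
    Quotient.mk (QuotientGroup.rightRel Γ) '' {w : Sol3 | w.2.2 = z} ≠ Set.univ := by
  intro h
  obtain ⟨ε, hε, hs⟩ := zPart_small Γ
  have h1 := (mem_plane_iff Γ z (Sol3.mk 0 0 (z + ε / 2))).mp (h ▸ Set.mem_univ _)
  have h2 : z + ε / 2 - z ∈ zPart Γ := h1
  rw [add_sub_cancel_left] at h2
  have := hs _ h2 (by rw [abs_of_pos (by positivity)]; linarith)
  linarith

theorem horocycle_flow_not_minimal_on_Sol3_manifold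
    (Γ : Subgroup Sol3) [DiscreteTopology Γ]
    [CompactSpace (Quotient (QuotientGroup.rightRel Γ))]
    [DiscreteTopology (latticePart Γ)]
    [CompactSpace ((ℝ × ℝ) ⧸ latticePart Γ)]
    (x y z : ℝ) :
    closure (Set.range fun s : ℝ =>
        rightMulQuot Γ (Sol3.mk s 0 0)
          (Quotient.mk (QuotientGroup.rightRel Γ) (Sol3.mk x y z)))
      = Quotient.mk (QuotientGroup.rightRel Γ) '' {w : Sol3 | w.2.2 = z} ∧
    IsCompact (Quotient.mk (QuotientGroup.rightRel Γ) '' {w : Sol3 | w.2.2 = z}) ∧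
    Quotient.mk (QuotientGroup.rightRel Γ) '' {w : Sol3 | w.2.2 = z} ≠ Set.univ ∧
    ¬ ∀ q : Quotient (QuotientGroup.rightRel Γ),
        Dense (Set.range fun s : ℝ => rightMulQuot Γ (Sol3.mk s 0 0) q) := by
  refine ⟨orbit_closure Γ x y z, plane_compact Γ z, plane_ne_univ Γ z, fun h => ?_⟩
  apply plane_ne_univ Γ z
  rw [← orbit_closure Γ x y z]
  exact (h _).closure_eq
end
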